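/- Let I be a finite nonempty index set, θ_i > 0 for i ∈ I, P_max > 0 and C_I > 0. If (P*_i)_{i∈I} is an optimal solution of the information subproblem, then there exists ν ≥ 0 such that for every i ∈ I: P*_i = 0 if ν < θ_i, P*_i = ν − θ_i if θ_i ≤ ν ≤ θ_i + P_max, and P*_i = P_max if ν > θ_i + P_max; that is, P*_i = min(P_max, max(0, ν − θ_i)) for all i ∈ I. -/

import Mathlib

open Finset

/-!
In terms of the levels `θ i + P i` the information rate is, up to a constant, the sum of their
logarithms. Dividing one level by `t > 1` and multiplying another by `t` therefore keeps the rate,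
and it lowers the total power whenever the first level exceeds `t` times the second.
Hence at an optimum the level of an index with positive power never exceeds the level of an index
below its cap, and any `ν` separating the two families of levels is a common water level.
-/

theorem eq_min_max_of_mem_Icc {α : Type*} [LinearOrder α] {a c p x : α} (hp : p ∈ Set.Icc a c)
    (hlower : a < p → p ≤ x) (hupper : p < c → x ≤ p) : p = min c (max a x) := by
  apply le_antisymm
  · refine le_min hp.2 (le_max_iff.2 ?_)
    exact (le_or_gt p a).imp_right hlower
  · refine min_le_iff.2 ?_
    exact (le_or_gt c p).imp_right fun hpc => max_le hp.1 (hupper hpc)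

theorem sum_sub_sum_eq_of_eq_off_pair {ι M : Type*} [AddCommGroup M] {s : Finset ι} {f g : ι → M}
    {i j : ι} (hi : i ∈ s) (hj : j ∈ s) (hij : i ≠ j)
    (h : ∀ k ∈ s, k ≠ i → k ≠ j → f k = g k) :
    ∑ k ∈ s, f k - ∑ k ∈ s, g k = (f i - g i) + (f j - g j) := by
  rw [← sum_sub_distrib]
  exact sum_eq_add_of_mem i j hi hj hij fun k hk hne => sub_eq_zero.2 (h k hk hne.1 hne.2)

theorem logb_one_add_div {b θ p : ℝ} (hθ : θ ≠ 0) (hp : θ + p ≠ 0) :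
    Real.logb b (1 + p / θ) = Real.logb b (θ + p) - Real.logb b θ := by
  rw [one_add_div hθ, Real.logb_div hp hθ]

theorem mul_add_div_lt_add {K : Type*} [Field K] [LinearOrder K] [IsStrictOrderedRing K]
    {t x y : K} (ht : 1 < t) (h : t * y < x) :
    t * y + x / t < x + y := by
  have ht₀ : 0 < t := zero_lt_one.trans ht
  have hgain : x + y - (t * y + x / t) = (t - 1) * (x - t * y) / t := by
    field_simp
    ring
  have : 0 < (t - 1) * (x - t * y) / t :=
    div_pos (mul_pos (sub_pos.2 ht) (sub_pos.2 h)) ht₀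
  linarith

/-- The water-filling power of a channel with threshold `θ` and power cap `c` at water level `ν`. -/
def waterFilling (θ c ν : ℝ) : ℝ := min c (max 0 (ν - θ))

section waterFilling

variable {θ c ν : ℝ}

theorem waterFilling_eq_zero (hc : 0 ≤ c) (hν : ν ≤ θ) : waterFilling θ c ν = 0 := by
  rw [waterFilling, max_eq_left (sub_nonpos.2 hν), min_eq_right hc]

theorem waterFilling_eq_sub (hθ : θ ≤ ν) (hν : ν ≤ θ + c) : waterFilling θ c ν = ν - θ := by
  rw [waterFilling, max_eq_right (sub_nonneg.2 hθ), min_eq_right (sub_le_iff_le_add'.2 hν)]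

theorem waterFilling_eq_cap (hν : θ + c ≤ ν) : waterFilling θ c ν = c :=
  min_eq_left (le_max_of_le_right (le_sub_iff_add_le'.2 hν))

end waterFilling

/-- The constraints of the information subproblem with required rate `C`, where each index `i` has
its own power cap `c i`. -/
structure IsFeasibleAllocation {ι : Type*} (I : Finset ι) (θ c : ι → ℝ) (C : ℝ) (P : ι → ℝ) :
    Prop where
  mem_Icc : ∀ i ∈ I, P i ∈ Set.Icc 0 (c i)
  le_rate : C ≤ ∑ i ∈ I, Real.logb 2 (1 + P i / θ i)

/-- Optimal solutions of the information subproblem: feasible allocations of least total power. -/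
structure IsOptimalAllocation {ι : Type*} (I : Finset ι) (θ c : ι → ℝ) (C : ℝ) (P : ι → ℝ) : Prop
    extends IsFeasibleAllocation I θ c C P where
  sum_le : ∀ Q, IsFeasibleAllocation I θ c C Q → ∑ i ∈ I, P i ≤ ∑ i ∈ I, Q i

open Classical in
/-- The exchange used against non-optimal allocations: the level `θ i + P i` is divided by `t` and
the level `θ j + P j` is multiplied by `t`. It is meant for `i ≠ j`. -/
noncomputable def levelTransfer {ι : Type*} (θ P : ι → ℝ) (i j : ι) (t : ℝ) : ι → ℝ :=
  Function.update (Function.update P i ((θ i + P i) / t - θ i)) j (t * (θ j + P j) - θ j)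

section levelTransfer

variable {ι : Type*} {I : Finset ι} {θ c P : ι → ℝ} {C t : ℝ} {i j k : ι}

theorem levelTransfer_source (hij : i ≠ j) :
    levelTransfer θ P i j t i = (θ i + P i) / t - θ i := by
  simp [levelTransfer, hij]

theorem levelTransfer_target : levelTransfer θ P i j t j = t * (θ j + P j) - θ j := by
  simp [levelTransfer]

theorem levelTransfer_of_ne (hki : k ≠ i) (hkj : k ≠ j) : levelTransfer θ P i j t k = P k := by
  simp [levelTransfer, hki, hkj]

theorem sum_levelTransfer_lt (hi : i ∈ I) (hj : j ∈ I) (hij : i ≠ j) (ht : 1 < t)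
    (hlevel : t * (θ j + P j) < θ i + P i) :
    ∑ k ∈ I, levelTransfer θ P i j t k < ∑ k ∈ I, P k := by
  have hdiff := sum_sub_sum_eq_of_eq_off_pair (f := levelTransfer θ P i j t) (g := P) hi hj hij
    fun k _ => levelTransfer_of_ne
  rw [levelTransfer_source hij, levelTransfer_target] at hdiff
  linarith [mul_add_div_lt_add ht hlevel]

theorem sum_logb_levelTransfer {b : ℝ} (hi : i ∈ I) (hj : j ∈ I) (hij : i ≠ j) (ht : t ≠ 0)
    (hθi : θ i ≠ 0) (hθj : θ j ≠ 0) (hleveli : θ i + P i ≠ 0) (hlevelj : θ j + P j ≠ 0) :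
    ∑ k ∈ I, Real.logb b (1 + levelTransfer θ P i j t k / θ k)
      = ∑ k ∈ I, Real.logb b (1 + P k / θ k) := by
  have hsource : Real.logb b (1 + levelTransfer θ P i j t i / θ i)
      = Real.logb b (1 + P i / θ i) - Real.logb b t := by
    have hlevel : θ i + levelTransfer θ P i j t i = (θ i + P i) / t := by
      rw [levelTransfer_source hij, add_sub_cancel]
    rw [logb_one_add_div hθi (hlevel ▸ div_ne_zero hleveli ht), hlevel,
      Real.logb_div hleveli ht, logb_one_add_div hθi hleveli]
    ring
  have htarget : Real.logb b (1 + levelTransfer θ P i j t j / θ j)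
      = Real.logb b (1 + P j / θ j) + Real.logb b t := by
    have hlevel : θ j + levelTransfer θ P i j t j = t * (θ j + P j) := by
      rw [levelTransfer_target, add_sub_cancel]
    rw [logb_one_add_div hθj (hlevel ▸ mul_ne_zero ht hlevelj), hlevel,
      Real.logb_mul ht hlevelj, logb_one_add_div hθj hlevelj]
    ring
  have hoff : ∀ k ∈ I, k ≠ i → k ≠ j → Real.logb b (1 + levelTransfer θ P i j t k / θ k)
      = Real.logb b (1 + P k / θ k) := fun k _ hki hkj => by rw [levelTransfer_of_ne hki hkj]
  rw [← sub_eq_zero, sum_sub_sum_eq_of_eq_off_pair hi hj hij hoff, hsource, htarget]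
  ring

theorem IsFeasibleAllocation.levelTransfer (h : IsFeasibleAllocation I θ c C P)
    (hi : i ∈ I) (hj : j ∈ I) (hij : i ≠ j) (hθi : 0 < θ i) (hθj : 0 < θ j) (ht : 1 ≤ t)
    (hsource : t * θ i ≤ θ i + P i) (htarget : t * (θ j + P j) ≤ θ j + c j) :
    IsFeasibleAllocation I θ c C (levelTransfer θ P i j t) := by
  have ht₀ : 0 < t := by linarith
  obtain ⟨hPi, hPic⟩ := h.mem_Icc i hi
  have hleveli : 0 < θ i + P i := by linarith
  have hlevelj : 0 < θ j + P j := by linarith [(h.mem_Icc j hj).1]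
  refine ⟨fun k hk => ?_, ?_⟩
  · by_cases hki : k = i
    · subst hki
      rw [levelTransfer_source hij]
      have hlower : θ k ≤ (θ k + P k) / t := (le_div_iff₀' ht₀).2 hsource
      have hupper : (θ k + P k) / t ≤ θ k + P k := div_le_self hleveli.le ht
      constructor <;> linarith
    by_cases hkj : k = j
    · subst hkj
      rw [levelTransfer_target]
      have hraise : θ k + P k ≤ t * (θ k + P k) := le_mul_of_one_le_left hlevelj.le ht
      constructor <;> linarith [(h.mem_Icc k hk).1]
    · rw [levelTransfer_of_ne hki hkj]
      exact h.mem_Icc k hk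
  · rw [sum_logb_levelTransfer hi hj hij ht₀.ne' hθi.ne' hθj.ne' hleveli.ne' hlevelj.ne']
    exact h.le_rate

end levelTransfer

namespace IsOptimalAllocation

variable {ι : Type*} {I : Finset ι} {θ c P : ι → ℝ} {C : ℝ}

theorem level_le_level (h : IsOptimalAllocation I θ c C P) {i j : ι} (hi : i ∈ I) (hj : j ∈ I)
    (hθi : 0 < θ i) (hθj : 0 < θ j) (hPi : 0 < P i) (hPj : P j < c j) :
    θ i + P i ≤ θ j + P j := by
  by_contra! hlt
  have hij : i ≠ j := by
    rintro rfl
    exact hlt.false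
  have hlevelj : 0 < θ j + P j := by linarith [(h.mem_Icc j hj).1]
  obtain ⟨t, ht, htmin⟩ : ∃ t, 1 < t ∧ t < min ((θ i + P i) / (θ j + P j))
      (min ((θ i + P i) / θ i) ((θ j + c j) / (θ j + P j))) :=
    exists_between <| lt_min ((one_lt_div hlevelj).2 hlt) <|
      lt_min ((one_lt_div hθi).2 (by linarith)) ((one_lt_div hlevelj).2 (by linarith))
  simp only [lt_min_iff, lt_div_iff₀ hlevelj, lt_div_iff₀ hθi] at htmin
  obtain ⟨hlevel, hsource, htarget⟩ := htmin
  have hfeasible := h.levelTransfer hi hj hij hθi hθj ht.le hsource.le htarget.le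
  exact (h.sum_le _ hfeasible).not_gt (sum_levelTransfer_lt hi hj hij ht hlevel)

theorem exists_separating_level (h : IsOptimalAllocation I θ c C P) (hθ : ∀ i ∈ I, 0 < θ i) :
    ∃ ν, 0 ≤ ν ∧ (∀ i ∈ I, 0 < P i → θ i + P i ≤ ν) ∧ (∀ j ∈ I, P j < c j → ν ≤ θ j + P j) := by
  let levels : Finset ℝ := insert 0 ({i ∈ I | 0 < P i}.image fun i => θ i + P i)
  refine ⟨levels.max' (insert_nonempty _ _), le_max' _ _ (mem_insert_self _ _),
    fun i hi hPi => ?_, fun j hj hPj => ?_⟩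
  · have hmem : θ i + P i ∈ levels :=
      mem_insert_of_mem (mem_image.2 ⟨i, mem_filter.2 ⟨hi, hPi⟩, rfl⟩)
    exact le_max' _ _ hmem
  · simp only [levels, max'_le_iff, forall_mem_insert, forall_mem_image, mem_filter, and_imp]
    exact ⟨add_nonneg (hθ j hj).le (h.mem_Icc j hj).1,
      fun i hi hPi => h.level_le_level hi hj (hθ i hi) (hθ j hj) hPi hPj⟩

theorem exists_eq_waterFilling (h : IsOptimalAllocation I θ c C P) (hθ : ∀ i ∈ I, 0 < θ i) :
    ∃ ν, 0 ≤ ν ∧ ∀ i ∈ I, P i = waterFilling (θ i) (c i) ν := by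
  obtain ⟨ν, hν, hpos, hcap⟩ := h.exists_separating_level hθ
  exact ⟨ν, hν, fun i hi => eq_min_max_of_mem_Icc (h.mem_Icc i hi)
    (fun hPi => le_sub_iff_add_le'.2 (hpos i hi hPi))
    (fun hPi => sub_le_iff_le_add'.2 (hcap i hi hPi))⟩

end IsOptimalAllocation

theorem stmt_8_general {ι : Type*} {I : Finset ι} {θ c P : ι → ℝ} {C : ℝ}
    (hθ : ∀ i ∈ I, 0 < θ i) (h : IsOptimalAllocation I θ c C P) :
    ∃ ν : ℝ, 0 ≤ ν ∧
      (∀ i ∈ I, (ν < θ i → P i = 0) ∧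
        (θ i ≤ ν → ν ≤ θ i + c i → P i = ν - θ i) ∧
        (θ i + c i < ν → P i = c i)) ∧
      ∀ i ∈ I, P i = min (c i) (max 0 (ν - θ i)) := by
  obtain ⟨ν, hν, hP⟩ := h.exists_eq_waterFilling hθ
  refine ⟨ν, hν, fun i hi => ?_, hP⟩
  have hc : 0 ≤ c i := (h.mem_Icc i hi).1.trans (h.mem_Icc i hi).2
  rw [hP i hi]
  exact ⟨fun hlt => waterFilling_eq_zero hc hlt.le, waterFilling_eq_sub,
    fun hlt => waterFilling_eq_cap hlt.le⟩

/-- Theorem 2 (necessity / KKT structure): any optimal solution of the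
information subproblem has water-filling form with a common water level `ν`. -/
theorem stmt_8 {ι : Type*} (I : Finset ι) (hI : I.Nonempty)
    (θ : ι → ℝ) (hθ : ∀ i ∈ I, 0 < θ i)
    (Pmax CI : ℝ) (hPmax : 0 < Pmax) (hCI : 0 < CI)
    (Pstar : ι → ℝ)
    (hfeas : (∀ i ∈ I, 0 ≤ Pstar i ∧ Pstar i ≤ Pmax) ∧
      ∑ i ∈ I, Real.logb 2 (1 + Pstar i / θ i) ≥ CI)
    (hopt : ∀ P : ι → ℝ, (∀ i ∈ I, 0 ≤ P i ∧ P i ≤ Pmax) →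
      (∑ i ∈ I, Real.logb 2 (1 + P i / θ i) ≥ CI) →
      ∑ i ∈ I, Pstar i ≤ ∑ i ∈ I, P i) :
    ∃ ν : ℝ, 0 ≤ ν ∧
      (∀ i ∈ I, (ν < θ i → Pstar i = 0) ∧
        (θ i ≤ ν → ν ≤ θ i + Pmax → Pstar i = ν - θ i) ∧
        (θ i + Pmax < ν → Pstar i = Pmax)) ∧
      ∀ i ∈ I, Pstar i = min Pmax (max 0 (ν - θ i)) := by
  exact stmt_8_general hθ ⟨⟨hfeas.1, hfeas.2⟩, fun P hP => hopt P hP.mem_Icc hP.le_rate⟩
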